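/- Let f : ℝ → ℝ be exponentially convex. Then there exists a nonnegative Borel measure σ on ℝ such that f(t) = ∫_ℝ e^{tμ} dσ(μ) for every real t (in particular, this integral is finite for every real t), and this representing measure σ is unique. -/

import Mathlib

open scoped ComplexOrder

/-- A function `f : ℝ → ℝ` is *exponentially convex* if it is continuous, nonnegative,
and for every `N`, all reals `t 1, …, t N` and complex numbers `ξ 1, …, ξ N`, the sum
`∑_{r,s} f (t r + t s) * ξ r * conj (ξ s)` is a nonnegative real number. -/
def ExponentiallyConvex (f : ℝ → ℝ) : Prop :=
  Continuous f ∧ (∀ t : ℝ, 0 ≤ f t) ∧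
    ∀ (N : ℕ) (t : Fin N → ℝ) (ξ : Fin N → ℂ),
      0 ≤ ∑ r : Fin N, ∑ s : Fin N, (f (t r + t s) : ℂ) * ξ r * (starRingEnd ℂ) (ξ s)

open Polynomial in
theorem sos_of_nonneg (n : ℕ) : ∀ p : ℝ[X], p.natDegree = n → (∀ x, 0 ≤ p.eval x) → IsSumSq p := by
  induction n using Nat.strong_induction_on with
  | _ n ih =>
  intro p hn hp
  -- the step: a factorisation by a monic quadratic sum of squares
  have step : ∀ q r : ℝ[X], p = q * r → q.Monic → q.natDegree = 2 → IsSumSq q →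
      (∀ᶠ x in Filter.cofinite, 0 < q.eval x) → IsSumSq p := by
    intro q r hpq hq hq2 hqs hpos
    by_cases hr : r = 0
    · subst hr; rw [hpq, mul_zero]; exact IsSumSq.zero
    rw [hpq]
    refine hqs.mul (ih r.natDegree ?_ r rfl ?_)
    · rw [← hn, hpq, hq.natDegree_mul' hr, hq2]; omega
    · have hd : Dense {x : ℝ | 0 < q.eval x} := by
        have : ({x : ℝ | 0 < q.eval x}ᶜ).Finite := hpos
        simpa using this.countable.dense_compl ℝ
      have hc : IsClosed {x : ℝ | 0 ≤ r.eval x} := isClosed_le continuous_const r.continuous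
      have hsub : {x : ℝ | 0 < q.eval x} ⊆ {x : ℝ | 0 ≤ r.eval x} := by
        intro x hx
        have h1 := hp x
        rw [hpq, eval_mul] at h1
        exact nonneg_of_mul_nonneg_right h1 hx
      intro x
      exact hc.closure_subset_iff.2 hsub (hd x)
  by_cases h0 : p.natDegree = 0
  · rw [eq_C_of_natDegree_eq_zero h0]
    have h1 := hp 0
    rw [eq_C_of_natDegree_eq_zero h0, eval_C] at h1
    rw [← Real.mul_self_sqrt h1, C_mul]
    exact IsSumSq.mul_self _
  have hdeg : (p.map (algebraMap ℝ ℂ)).degree ≠ 0 := by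
    rw [degree_map]
    intro h
    exact h0 (natDegree_eq_of_degree_eq_some h)
  obtain ⟨z, hz⟩ := IsAlgClosed.exists_root _ hdeg
  have hz' : aeval z p = 0 := by
    rwa [IsRoot, eval_map_algebraMap] at hz
  by_cases him : z.im = 0
  · obtain ⟨a, rfl⟩ : ∃ a : ℝ, z = a := ⟨z.re, by apply Complex.ext <;> simp [him]⟩
    have hroot : p.eval a = 0 := by
      have : aeval ((algebraMap ℝ ℂ) a) p = 0 := hz'
      rw [aeval_algebraMap_apply] at this
      simpa using this
    have hder : p.derivative.eval a = 0 := by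
      rw [← Polynomial.deriv]
      apply IsLocalMin.deriv_eq_zero
      filter_upwards with x
      rw [hroot]; exact hp x
    obtain ⟨q, hq⟩ := dvd_iff_isRoot.2 hroot
    have hq0 : q.eval a = 0 := by
      rw [hq] at hder
      simpa [derivative_mul] using hder
    obtain ⟨r, hr⟩ := dvd_iff_isRoot.2 hq0
    refine step ((X - C a) * (X - C a)) r (by rw [hq, hr]; ring) ((monic_X_sub_C a).mul (monic_X_sub_C a)) ?_ (IsSumSq.mul_self _) ?_
    · rw [(monic_X_sub_C a).natDegree_mul (monic_X_sub_C a)]; simp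
    · filter_upwards [(Set.finite_singleton a).compl_mem_cofinite] with x hx
      have : x - a ≠ 0 := sub_ne_zero.2 hx
      simp only [eval_mul, eval_sub, eval_X, eval_C]
      exact mul_self_pos.2 this
  · obtain ⟨r, hr⟩ := p.quadratic_dvd_of_aeval_eq_zero_im_ne_zero hz' him
    have e : (X ^ 2 - C (2 * z.re) * X + C (‖z‖ ^ 2) : ℝ[X]) =
        (X - C z.re) * (X - C z.re) + C z.im * C z.im := by
      rw [Complex.sq_norm, Complex.normSq_apply]
      simp only [C_mul, C_add]
      rw [show (C 2 : ℝ[X]) = 2 from rfl]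
      ring
    refine step _ r hr ?_ ?_ ?_ ?_
    · monicity!
    · compute_degree!
    · rw [e]; exact (IsSumSq.mul_self _).add (IsSumSq.mul_self _)
    · filter_upwards with x
      rw [e]
      simp only [eval_mul, eval_sub, eval_X, eval_C, eval_add]
      have : 0 < z.im * z.im := mul_self_pos.2 him
      nlinarith [mul_self_nonneg (x - z.re)]

open Polynomial in
theorem functional_nonneg {f : ℝ → ℝ} (hf : ExponentiallyConvex f) (a h : ℝ) (p : ℝ[X])
    (hp : IsSumSq p) : 0 ≤ (Polynomial.lsum (fun k => LinearMap.toSpanSingleton ℝ ℝ (f (2 * a + k * h))) : ℝ[X] →ₗ[ℝ] ℝ) p := by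
  induction hp with
  | zero => simp
  | @sq_add A s hs ih =>
    rw [map_add]
    refine add_nonneg ?_ ih
    have h1 := hf.2.2 (A.natDegree + 1) (fun i => a + i * h) (fun i => (A.coeff i : ℂ))
    have h2 : (0:ℝ) ≤ ∑ r : Fin (A.natDegree + 1), ∑ s : Fin (A.natDegree + 1),
        f ((a + r * h) + (a + s * h)) * A.coeff r * A.coeff s := by
      simp only [Complex.conj_ofReal] at h1
      exact_mod_cast h1
    refine h2.trans_eq (Eq.symm ?_)
    conv_lhs => rw [A.as_sum_range]
    rw [Finset.sum_mul_sum, map_sum, Finset.sum_range]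
    refine Finset.sum_congr rfl fun i _ => ?_
    rw [map_sum, Finset.sum_range]
    refine Finset.sum_congr rfl fun j _ => ?_
    rw [monomial_mul_monomial, Polynomial.lsum_apply, sum_monomial_index]
    · simp only [LinearMap.toSpanSingleton_apply, smul_eq_mul]
      push_cast
      ring_nf
    · simp

theorem functional_pos {f : ℝ → ℝ} (hf : ExponentiallyConvex f) (b h : ℝ) (hh : 0 < h) (N : ℕ)
    (c : Fin (N+1) → ℝ) (hc : ∀ x : ℝ, 0 ≤ ∑ k, c k * Real.exp ((b + k * h) * x)) :
    0 ≤ ∑ k, c k * f (b + k * h) := by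
  classical
  let p : Polynomial ℝ := ∑ k : Fin (N+1), Polynomial.monomial (2 * (k:ℕ)) (c k)
  have hp : ∀ y, 0 ≤ p.eval y := by
    have hsub : ({0}ᶜ : Set ℝ) ⊆ {y : ℝ | 0 ≤ p.eval y} := by
      intro y hy
      have hy : y ≠ 0 := hy
      have h1 := hc (Real.log (y^2) / h)
      have h2 : ∀ k : Fin (N+1), Real.exp ((b + k * h) * (Real.log (y^2) / h)) =
          Real.exp (b * (Real.log (y^2) / h)) * y ^ (2 * (k:ℕ)) := by
        intro k
        rw [add_mul, Real.exp_add, pow_mul]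
        congr 1
        rw [show (k:ℝ) * h * (Real.log (y^2) / h) = k * Real.log (y^2) by field_simp,
          Real.exp_nat_mul, Real.exp_log (by positivity)]
      simp only [h2] at h1
      have h3 : ∑ k, c k * (Real.exp (b * (Real.log (y^2) / h)) * y ^ (2 * ((k : Fin (N+1)):ℕ))) =
         Real.exp (b * (Real.log (y^2) / h)) * p.eval y := by
        simp only [p, Polynomial.eval_finsetSum, Polynomial.eval_monomial, Finset.mul_sum]
        refine Finset.sum_congr rfl fun i _ => by ring
      rw [h3] at h1
      exact nonneg_of_mul_nonneg_right h1 (Real.exp_pos _)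
    have hcl : IsClosed {y : ℝ | 0 ≤ p.eval y} := isClosed_le continuous_const p.continuous
    intro y
    exact hcl.closure_subset_iff.2 hsub ((dense_compl_singleton (0:ℝ)) y)
  have := functional_nonneg hf (b/2) (h/2) p (sos_of_nonneg _ p rfl hp)
  refine this.trans_eq (Eq.symm ?_)
  rw [map_sum]
  refine Finset.sum_congr rfl fun i _ => ?_
  rw [Polynomial.lsum_apply, Polynomial.sum_monomial_index]
  · simp only [LinearMap.toSpanSingleton_apply, smul_eq_mul]
    push_cast
    ring_nf
  · simp
open MeasureTheory in
theorem approx_measure {f : ℝ → ℝ} (hf : ExponentiallyConvex f) (b h : ℝ) (hh : 0 < h) (N : ℕ)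
    (ε : ℝ) (hε : 0 < ε) :
    ∃ σ : Measure ℝ, (∀ t : ℝ, Integrable (fun x : ℝ => Real.exp (t * x)) σ) ∧
      ∀ k : ℕ, k ≤ N → |(∫ x, Real.exp ((b + k * h) * x) ∂σ) - f (b + k * h)| ≤ ε := by
  classical
  let K : PointedCone ℝ (Fin (N+1) → ℝ) :=
    { carrier := {v | ∃ σ : Measure ℝ, (∀ t : ℝ, Integrable (fun x : ℝ => Real.exp (t * x)) σ) ∧
        ∀ k : Fin (N+1), v k = ∫ x, Real.exp ((b + k * h) * x) ∂σ}
      zero_mem' := ⟨0, by simp, by simp⟩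
      add_mem' := by
        rintro v w ⟨σ, h1, h2⟩ ⟨τ, h3, h4⟩
        refine ⟨σ + τ, fun t => (h1 t).add_measure (h3 t), fun k => ?_⟩
        rw [integral_add_measure (h1 _) (h3 _), Pi.add_apply, h2, h4]
      smul_mem' := by
        rintro c v ⟨σ, h1, h2⟩
        refine ⟨ENNReal.ofReal (c : ℝ) • σ, fun t => (h1 t).smul_measure ENNReal.ofReal_ne_top, fun k => ?_⟩
        rw [integral_smul_measure, ENNReal.toReal_ofReal c.2, Pi.smul_apply, h2]
        rfl }
  have hmem : (fun k : Fin (N+1) => f (b + k * h)) ∈ (Submodule.closure K : ProperCone ℝ (Fin (N+1) → ℝ)) := by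
    by_contra hcon
    obtain ⟨g, hg, hg0⟩ := ProperCone.hyperplane_separation_point _ hcon
    have hrep : ∀ v : Fin (N+1) → ℝ, g v = ∑ k, g (Pi.single k 1) * v k := by
      intro v
      conv_lhs => rw [pi_eq_sum_univ' v, map_sum]
      refine Finset.sum_congr rfl fun i _ => ?_
      rw [map_smul, smul_eq_mul, mul_comm]
    rw [hrep] at hg0
    refine absurd (functional_pos hf b h hh N (fun k => g (Pi.single k 1)) ?_) (not_le.2 hg0)
    intro x
    rw [← hrep (fun k => Real.exp ((b + k * h) * x))]
    apply hg
    apply subset_closure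
    exact ⟨Measure.dirac x, fun t => integrable_dirac (by simp), fun k => by simp⟩
  obtain ⟨v, ⟨σ, h1, h2⟩, hv⟩ := Metric.mem_closure_iff.1 hmem ε hε
  refine ⟨σ, h1, fun k hk => ?_⟩
  have h3 := (dist_pi_lt_iff hε).1 hv ⟨k, Nat.lt_succ_of_le hk⟩
  rw [dist_comm, Real.dist_eq, h2] at h3
  exact h3.le

open MeasureTheory ProbabilityTheory in
theorem unique_measure {σ τ : Measure ℝ}
    (h1 : ∀ t : ℝ, Integrable (fun x : ℝ => Real.exp (t * x)) σ)
    (h2 : ∀ t : ℝ, Integrable (fun x : ℝ => Real.exp (t * x)) τ)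
    (h : ∀ t : ℝ, ∫ x, Real.exp (t * x) ∂σ = ∫ x, Real.exp (t * x) ∂τ) : σ = τ := by
  have f1 : IsFiniteMeasure σ := by
    have := h1 0
    simpa [integrable_const_iff, isFiniteMeasure_iff] using this
  have f2 : IsFiniteMeasure τ := by
    have := h2 0
    simpa [integrable_const_iff, isFiniteMeasure_iff] using this
  have h0 : σ = 0 ↔ τ = 0 := by
    have := h 0
    simp at this
    rw [← Measure.measure_univ_eq_zero, ← Measure.measure_univ_eq_zero,
      ← measureReal_eq_zero_iff, ← measureReal_eq_zero_iff, this]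
  have hm : mgf id σ = mgf id τ := by
    ext t; exact h t
  apply Measure.ext_of_complexMGF_id_eq
  ext z
  apply eqOn_complexMGF_of_mgf' hm h0
  have : integrableExpSet id σ = Set.univ := by
    ext t; simpa [integrableExpSet] using h1 t
  simp [this]
open MeasureTheory Filter Topology in
theorem exists_seq {f : ℝ → ℝ} (hf : ExponentiallyConvex f) :
    ∃ σ : ℕ → Measure ℝ, (∀ m, ∀ t : ℝ, Integrable (fun x : ℝ => Real.exp (t * x)) (σ m)) ∧
      ∀ q : ℚ, Tendsto (fun m => ∫ x, Real.exp (q * x) ∂(σ m)) atTop (𝓝 (f q)) := by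
  have hex := fun m : ℕ => approx_measure hf (-(m:ℝ)) (1 / (m.factorial : ℝ)) (by positivity)
    (2 * m * m.factorial) (1 / ((m:ℝ) + 1)) (by positivity)
  choose σ h1 h2 using hex
  refine ⟨σ, h1, fun q => ?_⟩
  rw [tendsto_iff_norm_sub_tendsto_zero]
  refine squeeze_zero' (.of_forall fun _ => norm_nonneg _) ?_ tendsto_one_div_add_atTop_nhds_zero_nat
  filter_upwards [eventually_ge_atTop q.den, eventually_ge_atTop (q.num.natAbs)] with m hm1 hm2
  have hdvd : q.den ∣ m.factorial := Nat.dvd_factorial q.den_pos hm1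
  obtain ⟨d, hd⟩ := hdvd
  have hdpos : 0 < d := by
    rcases Nat.eq_zero_or_pos d with h | h
    · subst h; have := m.factorial_pos; omega
    · exact h
  have hden : 1 ≤ q.den := q.den_pos
  have hnum : -(m:ℤ) ≤ q.num ∧ q.num ≤ m := by omega
  have hdm : 1 ≤ q.den * d := Nat.mul_pos q.den_pos hdpos
  -- the index
  obtain ⟨k, hk⟩ : ∃ k : ℕ, (k : ℤ) = q.num * d + m * (q.den * d) := by
    refine ⟨(q.num * d + m * (q.den * d)).toNat, Int.toNat_of_nonneg ?_⟩
    have a1 : (d:ℤ) ≤ q.den * d := by nlinarith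
    have a2 : (0:ℤ) ≤ d := by positivity
    nlinarith
  have hkN : k ≤ 2 * m * m.factorial := by
    rw [hd]
    have : (k:ℤ) ≤ 2 * m * (q.den * d) := by
      rw [hk]
      have a1 : (d:ℤ) ≤ q.den * d := by nlinarith
      have a2 : (0:ℤ) ≤ d := by positivity
      nlinarith
    exact_mod_cast this
  have hq : -(m:ℝ) + k * (1 / (m.factorial : ℝ)) = q := by
    have hk' : (k:ℝ) = q.num * d + m * (q.den * d) := by exact_mod_cast hk
    rw [hk', hd]
    have hq' : (q:ℝ) = q.num / q.den := Rat.cast_def q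
    have n1 : (q.den : ℝ) ≠ 0 := by positivity
    have n2 : (d : ℝ) ≠ 0 := by positivity
    rw [hq']
    push_cast
    field_simp
    ring
  have := h2 m k hkN
  rw [hq] at this
  exact this

open MeasureTheory Filter Topology in
theorem exists_limit {σ : ℕ → Measure ℝ} {f : ℝ → ℝ}
    (h1 : ∀ m, ∀ t : ℝ, Integrable (fun x : ℝ => Real.exp (t * x)) (σ m))
    (h2 : ∀ q : ℚ, Tendsto (fun m => ∫ x, Real.exp (q * x) ∂(σ m)) atTop (𝓝 (f q))) :
    ∃ (μ : FiniteMeasure ℝ) (M : ℕ → FiniteMeasure ℝ), (∀ m, (M m : Measure ℝ) = σ m) ∧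
      Tendsto M (hyperfilter ℕ) (𝓝 μ) := by
  have hfin : ∀ m, IsFiniteMeasure (σ m) := fun m => by
    have := h1 m 0
    simpa [integrable_const_iff, isFiniteMeasure_iff] using this
  let M : ℕ → FiniteMeasure ℝ := fun m => ⟨σ m, hfin m⟩
  obtain ⟨C0, hC0⟩ := (h2 0).bddAbove_range
  obtain ⟨C1, hC1⟩ := (h2 1).bddAbove_range
  obtain ⟨C2, hC2⟩ := (h2 (-1)).bddAbove_range
  have b0 : ∀ m, (σ m).real Set.univ ≤ C0 := fun m => by
    have := hC0 ⟨m, rfl⟩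
    simpa using this
  have b1 : ∀ m, ∫ x, Real.exp x ∂(σ m) ≤ C1 := fun m => by
    have := hC1 ⟨m, rfl⟩
    simpa using this
  have b2 : ∀ m, ∫ x, Real.exp (-x) ∂(σ m) ≤ C2 := fun m => by
    have := hC2 ⟨m, rfl⟩
    simpa using this
  have i1 : ∀ m, Integrable (fun x => Real.exp x) (σ m) := fun m => by simpa using h1 m 1
  have i2 : ∀ m, Integrable (fun x => Real.exp (-x)) (σ m) := fun m => by simpa using h1 m (-1)
  let D : NNReal := Real.toNNReal (C1 + C2)
  have hu : Tendsto (fun n : ℕ => D / ((n : NNReal) + 1)) atTop (𝓝 0) := by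
    rw [← NNReal.tendsto_coe]
    have := (tendsto_one_div_add_atTop_nhds_zero_nat (𝕜 := ℝ)).const_mul (D : ℝ)
    simpa [div_eq_mul_inv] using this
  have hcomp := isCompact_setOfPred_finiteMeasure_mass_le_compl_isCompact_le (E := ℝ)
    (K := fun n : ℕ => Metric.closedBall (0:ℝ) n) (Real.toNNReal C0) hu
    (fun n => isCompact_closedBall _ _) (Or.inl inferInstance)
  have hM : ∀ m, M m ∈ {μ : FiniteMeasure ℝ | μ.mass ≤ Real.toNNReal C0 ∧
      ∀ n : ℕ, μ (Metric.closedBall (0:ℝ) n)ᶜ ≤ D / ((n : NNReal) + 1)} := by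
    intro m
    refine ⟨?_, fun n => ?_⟩
    · apply NNReal.le_toNNReal_of_coe_le
      exact b0 m
    · have key : ((n:ℝ) + 1) * (σ m).real {x | (n:ℝ) + 1 ≤ Real.exp x + Real.exp (-x)} ≤
          ∫ x, (Real.exp x + Real.exp (-x)) ∂(σ m) :=
        mul_meas_ge_le_integral_of_nonneg (.of_forall fun x => add_nonneg (Real.exp_pos x).le (Real.exp_pos (-x)).le) ((i1 m).add (i2 m)) _
      rw [integral_add (i1 m) (i2 m)] at key
      have hsub : (Metric.closedBall (0:ℝ) n)ᶜ ⊆ {x | (n:ℝ) + 1 ≤ Real.exp x + Real.exp (-x)} := by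
        intro x hx
        simp only [Metric.mem_closedBall, dist_zero_right, Real.norm_eq_abs, Set.mem_compl_iff, not_le] at hx
        have e1 := Real.add_one_le_exp x
        have e2 := Real.add_one_le_exp (-x)
        have e3 := Real.exp_pos x
        have e4 := Real.exp_pos (-x)
        show (n:ℝ) + 1 ≤ Real.exp x + Real.exp (-x)
        rcases lt_abs.1 hx with h | h <;> linarith
      have hmono : (σ m).real (Metric.closedBall (0:ℝ) n)ᶜ ≤
        (σ m).real {x | (n:ℝ) + 1 ≤ Real.exp x + Real.exp (-x)} := measureReal_mono hsub
      have hD : C1 + C2 ≤ (D : ℝ) := Real.le_coe_toNNReal _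
      have hpos : (0:ℝ) < (n:ℝ) + 1 := by positivity
      rw [← NNReal.coe_le_coe]
      push_cast
      rw [le_div_iff₀ hpos]
      have : ((M m (Metric.closedBall (0:ℝ) n)ᶜ : NNReal) : ℝ) = (σ m).real (Metric.closedBall (0:ℝ) n)ᶜ := rfl
      rw [this]
      nlinarith [b1 m, b2 m]
  obtain ⟨μ, -, hμ⟩ := hcomp.ultrafilter_le_nhds ((hyperfilter ℕ).map M)
    (by
      rw [le_principal_iff]
      exact Filter.mem_map.2 (Filter.univ_mem' hM))
  exact ⟨μ, M, fun m => rfl, hμ⟩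

open MeasureTheory Filter Topology in
theorem limit_moment {μ : FiniteMeasure ℝ} {M : ℕ → FiniteMeasure ℝ} {f : ℝ → ℝ}
    (h1 : ∀ m, ∀ t : ℝ, Integrable (fun x : ℝ => Real.exp (t * x)) (M m : Measure ℝ))
    (h2 : ∀ q : ℚ, Tendsto (fun m => ∫ x, Real.exp (q * x) ∂(M m : Measure ℝ)) atTop (𝓝 (f q)))
    (hM : Tendsto M (hyperfilter ℕ) (𝓝 μ)) (q : ℚ) :
    Integrable (fun x : ℝ => Real.exp (q * x)) (μ : Measure ℝ) ∧
      ∫ x, Real.exp (q * x) ∂(μ : Measure ℝ) = f q := by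
  have h2' : ∀ q : ℚ, Tendsto (fun m => ∫ x, Real.exp (q * x) ∂(M m : Measure ℝ)) (hyperfilter ℕ)
      (𝓝 (f q)) := fun q => (h2 q).mono_left Nat.hyperfilter_le_atTop
  let g : ℕ → BoundedContinuousFunction ℝ ℝ := fun K =>
    BoundedContinuousFunction.ofNormedAddCommGroup (fun x => min (Real.exp (q * x)) K) (by fun_prop) K
      (fun x => by
        rw [Real.norm_of_nonneg (by positivity)]
        exact min_le_right _ _)
  have hg : ∀ K x, g K x = min (Real.exp (q * x)) K := fun K x => rfl
  have hgM : ∀ K, Tendsto (fun m => ∫ x, g K x ∂(M m : Measure ℝ)) (hyperfilter ℕ)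
      (𝓝 (∫ x, g K x ∂(μ : Measure ℝ))) := fun K =>
    FiniteMeasure.tendsto_iff_forall_integral_tendsto.1 hM (g K)
  have up : ∀ K, ∫ x, g K x ∂(μ : Measure ℝ) ≤ f q := fun K =>
    le_of_tendsto_of_tendsto' (hgM K) (h2' q) fun m =>
      integral_mono ((g K).integrable _) (h1 m q) fun x => min_le_left _ _
  have low : ∀ K : ℕ, f q ≤ ∫ x, g (K+1) x ∂(μ : Measure ℝ) + (1 / ((K:ℝ) + 1)) * f (2 * q) := by
    intro K
    have t2 := h2' (2 * q)
    push_cast at t2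
    refine le_of_tendsto_of_tendsto' (h2' q) ((hgM (K+1)).add (t2.const_mul (1 / ((K:ℝ) + 1)))) fun m => ?_
    rw [← integral_const_mul, ← integral_add ((g _).integrable _) ((h1 m (2 * q)).const_mul _)]
    refine integral_mono (h1 m q) (((g _).integrable _).add ((h1 m (2 * q)).const_mul _)) fun x => ?_
    have e : Real.exp (2 * q * x) = Real.exp (q * x) * Real.exp (q * x) := by
      rw [← Real.exp_add]; ring_nf
    have hpos := Real.exp_pos (q * x)
    have hK : (0:ℝ) < (K:ℝ) + 1 := by positivity
    simp only [hg, e]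
    push_cast
    rcases le_total (Real.exp (q * x)) ((K:ℝ) + 1) with h | h
    · rw [min_eq_left h]
      have : 0 ≤ 1 / ((K:ℝ) + 1) * (Real.exp (q * x) * Real.exp (q * x)) := by positivity
      linarith
    · rw [min_eq_right h]
      have : Real.exp (q * x) ≤ 1 / ((K:ℝ) + 1) * (Real.exp (q * x) * Real.exp (q * x)) := by
        rw [one_div, inv_mul_eq_div, le_div_iff₀ hK]
        nlinarith
      linarith
  have hlim : ∀ x, Tendsto (fun K => g K x) atTop (𝓝 (Real.exp (q * x))) := by
    intro x
    apply tendsto_const_nhds.congr'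
    filter_upwards [eventually_ge_atTop ⌈Real.exp (q * x)⌉₊] with K hK
    rw [hg, min_eq_left (Nat.ceil_le.1 hK)]
  have hint : Integrable (fun x : ℝ => Real.exp (q * x)) (μ : Measure ℝ) := by
    refine ⟨by fun_prop, ?_⟩
    rw [hasFiniteIntegral_iff_ofReal (.of_forall fun x => by positivity)]
    have hl : Tendsto (fun K => ∫⁻ x, ENNReal.ofReal (g K x) ∂(μ : Measure ℝ)) atTop
        (𝓝 (∫⁻ x, ENNReal.ofReal (Real.exp (q * x)) ∂(μ : Measure ℝ))) := by
      refine lintegral_tendsto_of_tendsto_of_monotone (fun K => by fun_prop)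
        (.of_forall fun x => ?_) (.of_forall fun x => ?_)
      · intro K L hKL
        apply ENNReal.ofReal_le_ofReal
        rw [hg, hg]
        exact min_le_min_left _ (by exact_mod_cast hKL)
      · exact (ENNReal.continuous_ofReal.tendsto _).comp (hlim x)
    refine lt_of_le_of_lt (le_of_tendsto' hl fun K => ?_) (ENNReal.ofReal_lt_top (r := f q))
    rw [← ofReal_integral_eq_lintegral_ofReal ((g K).integrable _)
      (.of_forall fun x => by rw [hg]; exact le_min (Real.exp_pos _).le (by positivity))]
    exact ENNReal.ofReal_le_ofReal (up K)
  refine ⟨hint, ?_⟩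
  have hI : Tendsto (fun K => ∫ x, g K x ∂(μ : Measure ℝ)) atTop
      (𝓝 (∫ x, Real.exp (q * x) ∂(μ : Measure ℝ))) := by
    refine tendsto_integral_of_dominated_convergence (fun x => Real.exp (q * x))
      (fun K => ((g K).integrable _).aestronglyMeasurable) hint (fun K => .of_forall fun x => ?_)
      (.of_forall hlim)
    rw [hg, Real.norm_of_nonneg (by positivity)]
    exact min_le_left _ _
  apply le_antisymm
  · exact le_of_tendsto' hI up
  · have := ((tendsto_add_atTop_iff_nat 1).2 hI).add
      ((tendsto_one_div_add_atTop_nhds_zero_nat (𝕜 := ℝ)).mul_const (f (2 * q)))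
    rw [zero_mul, add_zero] at this
    exact ge_of_tendsto' this low

open MeasureTheory in
theorem expConvex_laplace_representation (f : ℝ → ℝ) (hf : ExponentiallyConvex f) :
    ∃! σ : Measure ℝ,
      (∀ t : ℝ, Integrable (fun μ : ℝ => Real.exp (t * μ)) σ) ∧
        ∀ t : ℝ, f t = ∫ μ : ℝ, Real.exp (t * μ) ∂σ := by
  obtain ⟨σ, h1, h2⟩ := exists_seq hf
  obtain ⟨μ, M, hM, hlim⟩ := exists_limit h1 h2
  have h3 := limit_moment (μ := μ) (M := M) (f := f) (fun m t => by rw [hM]; exact h1 m t)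
    (fun q => by simp only [hM]; exact h2 q) hlim
  have hint : ∀ t : ℝ, Integrable (fun x : ℝ => Real.exp (t * x)) (μ : Measure ℝ) := by
    intro t
    obtain ⟨n, hn⟩ := exists_nat_ge |t|
    have i1 := (h3 (n : ℚ)).1
    have i2 := (h3 (-(n : ℚ))).1
    refine (i1.add i2).mono' (by fun_prop) (.of_forall fun x => ?_)
    rw [Real.norm_of_nonneg (Real.exp_pos _).le]
    simp only [Pi.add_apply]
    push_cast
    have hb := abs_le.1 hn
    rcases le_total 0 x with hx | hx
    · have : Real.exp (t * x) ≤ Real.exp (n * x) := Real.exp_le_exp.2 (by nlinarith)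
      linarith [Real.exp_pos (-(n:ℝ) * x)]
    · have : Real.exp (t * x) ≤ Real.exp (-(n:ℝ) * x) := Real.exp_le_exp.2 (by nlinarith)
      linarith [Real.exp_pos ((n:ℝ) * x)]
  have hcont : Continuous (fun t : ℝ => ∫ x, Real.exp (t * x) ∂(μ : Measure ℝ)) :=
    ProbabilityTheory.continuous_mgf (X := id) (μ := (μ : Measure ℝ)) hint
  have heq : f = fun t : ℝ => ∫ x, Real.exp (t * x) ∂(μ : Measure ℝ) :=
    Rat.denseRange_cast.equalizer hf.1 hcont (by ext q; exact (h3 q).2.symm)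
  refine ⟨μ, ⟨hint, fun t => congrFun heq t⟩, ?_⟩
  rintro τ ⟨ht1, ht2⟩
  exact unique_measure ht1 hint fun t => by rw [← ht2 t]; exact congrFun heq t
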